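/- Fix τ ∈ ℍ, parameters n₀,n₁,n₂,n₃, A, B ∈ ℂ, and p ∈ ℂ with p ∉ (1/2)Λ_τ (so that in particular 2p ∉ Λ_τ and p is not congruent to any half-period mod Λ_τ). Then the generalized Lamé equation y″ = I(z;τ)y has, near the regular singular point p, a fundamental system of solutions of the form y₁(z) = (z−p)^{−1/2}h₁(z), y₂(z) = (z−p)^{3/2}h₂(z) with h₁, h₂ holomorphic at p and h₁(p) ≠ 0, h₂(p) ≠ 0 (i.e. no solution has a logarithmic singularity at p; equivalently ±p are apparent singularities) if and only if B = A² − ζ(2p|τ)A − (3/4)℘(2p|τ) − Σ_{k=0}^{3} n_k(n_k+1)℘(p + ω_k/2|τ). -/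

import Mathlib

open Complex Filter Topology Asymptotics

noncomputable section

/-- membership in the lattice `Λ_τ = ℤ + τℤ`. -/
def InLattice (τ z : ℂ) : Prop := ∃ m n : ℤ, z = (m : ℂ) + (n : ℂ) * τ

/-- the half-period generators `ω₀ = 0, ω₁ = 1, ω₂ = τ, ω₃ = 1 + τ`. -/
def halfp (τ : ℂ) : Fin 4 → ℂ := ![0, 1, τ, 1 + τ]

/-- the Weierstrass elliptic function `℘(z|τ)`. -/
def wp (τ z : ℂ) : ℂ :=
  z⁻¹ ^ 2 + ∑' w : {w : ℤ × ℤ // w ≠ 0},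
    ((z - ((w.1.1 : ℂ) + (w.1.2 : ℂ) * τ))⁻¹ ^ 2 - ((w.1.1 : ℂ) + (w.1.2 : ℂ) * τ)⁻¹ ^ 2)

/-- `℘′(z|τ)`, the `z`-derivative of `℘`. -/
def wpd (τ z : ℂ) : ℂ := deriv (wp τ) z

/-- `℘″(z|τ)`. -/
def wpdd (τ z : ℂ) : ℂ := deriv (wpd τ) z

def e1 (τ : ℂ) : ℂ := wp τ (1 / 2)
def e2 (τ : ℂ) : ℂ := wp τ (τ / 2)
def e3 (τ : ℂ) : ℂ := wp τ ((1 + τ) / 2)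

def g2 (τ : ℂ) : ℂ := -4 * (e1 τ * e2 τ + e1 τ * e3 τ + e2 τ * e3 τ)

/-- `zeta` is the Weierstrass zeta function: for each `τ ∈ ℍ`, `zeta τ` is odd, satisfies
`∂ζ/∂z = -℘` off the lattice, and `ζ(z|τ) - 1/z → 0` as `z → 0`. -/
def IsWeierstrassZeta (zeta : ℂ → ℂ → ℂ) : Prop :=
  ∀ τ : ℂ, 0 < τ.im →
    (∀ z : ℂ, zeta τ (-z) = - zeta τ z) ∧
    (∀ z : ℂ, ¬ InLattice τ z → HasDerivAt (zeta τ) (- wp τ z) z) ∧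
    Tendsto (fun z => zeta τ z - z⁻¹) (𝓝[≠] (0 : ℂ)) (𝓝 0)

/-- `eta1 τ = ζ(z+1|τ) - ζ(z|τ)` is the first quasi-period. -/
def IsEta1 (zeta : ℂ → ℂ → ℂ) (eta1 : ℂ → ℂ) : Prop :=
  ∀ τ : ℂ, 0 < τ.im → ∀ z : ℂ, ¬ InLattice τ z →
    eta1 τ = zeta τ (z + 1) - zeta τ z

/-- `eta2 τ = ζ(z+τ|τ) - ζ(z|τ)` is the second quasi-period. -/
def IsEta2 (zeta : ℂ → ℂ → ℂ) (eta2 : ℂ → ℂ) : Prop :=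
  ∀ τ : ℂ, 0 < τ.im → ∀ z : ℂ, ¬ InLattice τ z →
    eta2 τ = zeta τ (z + τ) - zeta τ z

/-- `sigma` is the Weierstrass sigma function: entire, odd, with
`∂/∂z log σ = ζ` off the lattice and `σ(z|τ)/z → 1` as `z → 0`. -/
def IsWeierstrassSigma (zeta sigma : ℂ → ℂ → ℂ) : Prop :=
  ∀ τ : ℂ, 0 < τ.im →
    (∀ z : ℂ, sigma τ (-z) = - sigma τ z) ∧
    Differentiable ℂ (sigma τ) ∧
    (∀ z : ℂ, ¬ InLattice τ z → HasDerivAt (sigma τ) (zeta τ z * sigma τ z) z) ∧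
    Tendsto (fun z => sigma τ z / z) (𝓝[≠] (0 : ℂ)) (𝓝 1)

/-- the Hamiltonian system (142) for `(p(τ), A(τ))` on `V`. -/
def HamSystem (n : Fin 4 → ℂ) (zeta : ℂ → ℂ → ℂ) (eta1 : ℂ → ℂ)
    (V : Set ℂ) (p A : ℂ → ℂ) : Prop :=
  ∀ τ ∈ V,
    HasDerivAt p ((-Complex.I / (4 * (Real.pi : ℂ))) *
      (2 * A τ - zeta τ (2 * p τ) + 2 * p τ * eta1 τ)) τ ∧
    HasDerivAt A ((Complex.I / (4 * (Real.pi : ℂ))) *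
      ((2 * wp τ (2 * p τ) + 2 * eta1 τ) * A τ - (3 / 2) * wpd τ (2 * p τ)
        - ∑ k : Fin 4, n k * (n k + 1) * wpd τ (p τ + halfp τ k / 2))) τ

/-- the generalized Lamé potential `I(z;τ)`. -/
def Ipot (n : Fin 4 → ℂ) (zeta : ℂ → ℂ → ℂ) (A B p τ z : ℂ) : ℂ :=
  (∑ k : Fin 4, n k * (n k + 1) * wp τ (z + halfp τ k / 2))
    + (3 / 4) * (wp τ (z + p) + wp τ (z - p))
    + A * (zeta τ (z + p) - zeta τ (z - p)) + B

end

/-!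
Substituting `y = (z - p)^σ h` with `σ = -1/2` or `σ = 3/2` turns `y″ = I y` into a Fuchsian
equation for `h`, and a power series solves such an equation if and only if its coefficients satisfy
a triangular recursion with the values of the indicial polynomial on the diagonal. Formal solutions
converge, since the indicial polynomial grows quadratically. For `σ = 3/2` the diagonal never
vanishes after the start, so a solution with `h p ≠ 0` always exists. For `σ = -1/2` the diagonal
`k (k - 2)` vanishes again at `k = 2`, where solvability is the only condition. Near `p` the
potential is `I = (3/4) (z - p)⁻² - A (z - p)⁻¹ + F(z)` with `F` analytic, and the condition reads
`F p = A²`, which is the asserted formula for `B`.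
-/

open scoped PowerSeries

section PowerSeriesExpansion

variable {𝕜 : Type*} [NontriviallyNormedField 𝕜]

/-- `f` is the sum near `x` of the power series `φ` in the variable `z - x`. Storing the
coefficients in `𝕜⟦X⟧` turns multiplication and differentiation of functions into the algebraic
operations on formal power series. -/
def HasPowerSeriesAt (f : 𝕜 → 𝕜) (φ : 𝕜⟦X⟧) (x : 𝕜) : Prop :=
  HasFPowerSeriesAt f (.ofScalars 𝕜 fun k => φ.coeff k) x

lemma exists_hasPowerSeriesAt_of_analyticAt {f : 𝕜 → 𝕜} {x : 𝕜} (hf : AnalyticAt 𝕜 f x) :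
    ∃ φ, HasPowerSeriesAt f φ x := by
  obtain ⟨p, hp⟩ := hf
  refine ⟨PowerSeries.mk p.coeff, ?_⟩
  simpa only [HasPowerSeriesAt, hasFPowerSeriesAt_iff, FormalMultilinearSeries.coeff_ofScalars,
    PowerSeries.coeff_mk] using hp

namespace HasPowerSeriesAt

lemma iff_eventually_hasSum {f : 𝕜 → 𝕜} {φ : 𝕜⟦X⟧} {x : 𝕜} :
    HasPowerSeriesAt f φ x ↔
      ∀ᶠ y in 𝓝 0, HasSum (fun k => φ.coeff k * y ^ k) (f (x + y)) := by
  simp only [HasPowerSeriesAt, hasFPowerSeriesAt_iff, FormalMultilinearSeries.coeff_ofScalars,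
    smul_eq_mul, mul_comm]

variable {f g : 𝕜 → 𝕜} {φ ψ : 𝕜⟦X⟧} {x : 𝕜}

lemma analyticAt (hf : HasPowerSeriesAt f φ x) : AnalyticAt 𝕜 f x :=
  HasFPowerSeriesAt.analyticAt hf

lemma coeff_zero (hf : HasPowerSeriesAt f φ x) : φ.coeff 0 = f x := by
  simpa using HasFPowerSeriesAt.coeff_zero hf 0

lemma eventually_nhdsNE_eq_zero_iff (hf : HasPowerSeriesAt f φ x) :
    (∀ᶠ z in 𝓝[≠] x, f z = 0) ↔ φ = 0 := by
  constructor
  · intro h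
    have hf0 : f =ᶠ[𝓝 x] 0 :=
      (hf.analyticAt.continuousAt.eventuallyEq_nhds_iff_eventuallyEq_nhdsNE
        continuousAt_const).mp h
    have hφ := (HasFPowerSeriesAt.congr hf hf0).eq_zero
    ext k
    simpa using congrFun ((FormalMultilinearSeries.ofScalars_series_eq_zero 𝕜).mp hφ) k
  · rintro rfl
    have h0 : HasFPowerSeriesAt f (0 : FormalMultilinearSeries 𝕜 𝕜 𝕜) x := by
      simpa [HasPowerSeriesAt, ← Pi.zero_def] using hf
    exact h0.eventually_eq_zero.filter_mono nhdsWithin_le_nhds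

lemma const (c x : 𝕜) : HasPowerSeriesAt (fun _ => c) (PowerSeries.C c) x := by
  refine iff_eventually_hasSum.mpr (.of_forall fun y => ?_)
  simpa +contextual [PowerSeries.coeff_C] using
    hasSum_single (f := fun k => (PowerSeries.C c).coeff k * y ^ k) 0

lemma sub_const (x : 𝕜) : HasPowerSeriesAt (fun z => z - x) PowerSeries.X x := by
  refine iff_eventually_hasSum.mpr (.of_forall fun y => ?_)
  simpa +contextual [PowerSeries.coeff_X] using
    hasSum_single (f := fun k => PowerSeries.X.coeff k * y ^ k) 1

lemma add (hf : HasPowerSeriesAt f φ x) (hg : HasPowerSeriesAt g ψ x) :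
    HasPowerSeriesAt (fun z => f z + g z) (φ + ψ) x := by
  have h := HasFPowerSeriesAt.add hf hg
  rwa [← FormalMultilinearSeries.ofScalars_add] at h

lemma eventually_summable_norm (hf : HasPowerSeriesAt f φ x) :
    ∀ᶠ y in 𝓝 0, Summable fun k => ‖φ.coeff k * y ^ k‖ := by
  obtain ⟨r, hr⟩ := hf
  filter_upwards [Metric.eball_mem_nhds 0 hr.r_pos] with y hy
  simpa [FormalMultilinearSeries.ofScalars_apply_eq, mul_comm] using
    FormalMultilinearSeries.summable_norm_apply _ (Metric.eball_subset_eball hr.r_le hy)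

lemma mul [CompleteSpace 𝕜] (hf : HasPowerSeriesAt f φ x) (hg : HasPowerSeriesAt g ψ x) :
    HasPowerSeriesAt (fun z => f z * g z) (φ * ψ) x := by
  refine iff_eventually_hasSum.mpr ?_
  filter_upwards [iff_eventually_hasSum.mp hf, iff_eventually_hasSum.mp hg,
    hf.eventually_summable_norm, hg.eventually_summable_norm] with y hfy hgy hφ hψ
  have hcauchy (k : ℕ) : (φ * ψ).coeff k * y ^ k = ∑ ij ∈ Finset.HasAntidiagonal.antidiagonal k,
      φ.coeff ij.1 * y ^ ij.1 * (ψ.coeff ij.2 * y ^ ij.2) := by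
    rw [PowerSeries.coeff_mul, Finset.sum_mul]
    refine Finset.sum_congr rfl fun ij hij => ?_
    rw [← Finset.HasAntidiagonal.mem_antidiagonal.mp hij]
    ring
  simp only [hcauchy]
  rw [← hfy.tsum_eq, ← hgy.tsum_eq,
    tsum_mul_tsum_eq_tsum_sum_antidiagonal_of_summable_norm hφ hψ]
  exact (summable_norm_sum_mul_antidiagonal_of_summable_norm hφ hψ).of_norm.hasSum

lemma deriv [CompleteSpace 𝕜] (hf : HasPowerSeriesAt f φ x) :
    HasPowerSeriesAt (deriv f) (PowerSeries.derivative 𝕜 φ) x := by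
  obtain ⟨r, hr⟩ := hf
  refine hasFPowerSeriesAt_iff.mpr ?_
  filter_upwards [hasFPowerSeriesAt_iff.mp hr.fderiv.hasFPowerSeriesAt] with y hy
  have h := hy.mapL (ContinuousLinearMap.apply 𝕜 𝕜 1)
  simpa [FormalMultilinearSeries.derivSeries_coeff_one, PowerSeries.coeff_derivative, mul_comm]
    using h

lemma eventually_exists_norm_coeff_mul_pow_le (hf : HasPowerSeriesAt f φ x) :
    ∀ᶠ r in 𝓝[>] (0 : ℝ), ∃ M, ∀ k, ‖φ.coeff k‖ * r ^ k ≤ M := by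
  obtain ⟨R, hR⟩ := hf
  have hlim : Tendsto ENNReal.ofReal (𝓝[>] 0) (𝓝 0) :=
    tendsto_nhdsWithin_of_tendsto_nhds (ENNReal.continuous_ofReal.tendsto' 0 0 ENNReal.ofReal_zero)
  filter_upwards [hlim.eventually_lt_const hR.r_pos, self_mem_nhdsWithin] with r hrR hr
  obtain ⟨M, -, hM⟩ :=
    FormalMultilinearSeries.norm_mul_pow_le_of_lt_radius _ (hrR.trans_le hR.r_le)
  exact ⟨M, by simpa [Real.coe_toNNReal r (le_of_lt hr)] using hM⟩

end HasPowerSeriesAt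

lemma exists_hasPowerSeriesAt_of_norm_coeff_le [CompleteSpace 𝕜] {φ : 𝕜⟦X⟧} {r C : ℝ}
    (hr : 0 < r) (hφ : ∀ k, ‖φ.coeff k‖ * r ^ k ≤ C) (x : 𝕜) :
    ∃ f, HasPowerSeriesAt f φ x := by
  lift r to NNReal using hr.le
  have hradius := FormalMultilinearSeries.le_radius_of_bound
    (p := .ofScalars 𝕜 fun k => φ.coeff k) C (r := r) (by simpa using hφ)
  have hsum := (FormalMultilinearSeries.hasFPowerSeriesOnBall _
    ((ENNReal.coe_pos.mpr (by exact_mod_cast hr)).trans_le hradius)).comp_sub x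
  rw [zero_add] at hsum
  exact ⟨_, hsum.hasFPowerSeriesAt⟩

end PowerSeriesExpansion

section Frobenius

open Finset (range)

section Formal

variable {𝕜 : Type*} [Field 𝕜]

/-- The formal counterpart of the operator `h ↦ (z - x)² h″ + (z - x) P h′ + Q h` with a regular
singular point at `x`. -/
noncomputable def fuchsianOp (P Q φ : 𝕜⟦X⟧) : 𝕜⟦X⟧ :=
  PowerSeries.X ^ 2 * PowerSeries.derivative 𝕜 (PowerSeries.derivative 𝕜 φ) +
    P * PowerSeries.X * PowerSeries.derivative 𝕜 φ + Q * φ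

/-- The indicial polynomial `s (s - 1) + P(x) s + Q(x)` of `fuchsianOp P Q`, whose roots are the
exponents at the singular point. -/
noncomputable def indicial (P Q : 𝕜⟦X⟧) (s : 𝕜) : 𝕜 :=
  s * (s - 1) + P.coeff 0 * s + Q.coeff 0

lemma coeff_X_sq_mul_derivative_derivative (φ : 𝕜⟦X⟧) (k : ℕ) :
    (PowerSeries.X ^ 2 * PowerSeries.derivative 𝕜 (PowerSeries.derivative 𝕜 φ)).coeff k =
      k * (k - 1) * φ.coeff k := by
  rcases k with _ | _ | k
  · simp [PowerSeries.coeff_X_pow_mul']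
  · simp [PowerSeries.coeff_X_pow_mul']
  · rw [pow_two, mul_assoc, PowerSeries.coeff_succ_X_mul, PowerSeries.coeff_succ_X_mul,
      PowerSeries.coeff_derivative, PowerSeries.coeff_derivative]
    push_cast
    ring

lemma coeff_X_mul_derivative (φ : 𝕜⟦X⟧) (k : ℕ) :
    (PowerSeries.X * PowerSeries.derivative 𝕜 φ).coeff k = k * φ.coeff k := by
  cases k with
  | zero => simp
  | succ k =>
    rw [PowerSeries.coeff_succ_X_mul, PowerSeries.coeff_derivative]
    push_cast
    ring

lemma coeff_fuchsianOp (P Q φ : 𝕜⟦X⟧) (k : ℕ) :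
    (fuchsianOp P Q φ).coeff k = indicial P Q k * φ.coeff k +
      ∑ j ∈ range k, (j * P.coeff (k - j) + Q.coeff (k - j)) * φ.coeff j := by
  have hlower : (P * PowerSeries.X * PowerSeries.derivative 𝕜 φ + Q * φ).coeff k =
      ∑ j ∈ range (k + 1), (j * P.coeff (k - j) + Q.coeff (k - j)) * φ.coeff j := by
    rw [mul_assoc, mul_comm P, mul_comm Q, map_add, PowerSeries.coeff_mul, PowerSeries.coeff_mul,
      ← Finset.sum_add_distrib, Finset.Nat.sum_antidiagonal_eq_sum_range_succ_mk]
    refine Finset.sum_congr rfl fun j _ => ?_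
    rw [coeff_X_mul_derivative]
    ring
  rw [fuchsianOp, add_assoc, map_add, coeff_X_sq_mul_derivative_derivative, hlower,
    Finset.sum_range_succ, Nat.sub_self, indicial]
  ring

lemma forall_le_two_coeff_fuchsianOp_eq_zero_iff {Q : 𝕜⟦X⟧} (hQ : Q.coeff 0 = 0) (φ : 𝕜⟦X⟧) :
    (∀ k ≤ 2, (fuchsianOp (PowerSeries.C (-1)) Q φ).coeff k = 0) ↔
      φ.coeff 1 = Q.coeff 1 * φ.coeff 0 ∧ (Q.coeff 1 ^ 2 + Q.coeff 2) * φ.coeff 0 = 0 := by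
  have h0 : (fuchsianOp (PowerSeries.C (-1)) Q φ).coeff 0 = 0 := by
    simp [coeff_fuchsianOp, indicial, hQ]
  have h1 : (fuchsianOp (PowerSeries.C (-1)) Q φ).coeff 1 =
      Q.coeff 1 * φ.coeff 0 - φ.coeff 1 := by
    simp [coeff_fuchsianOp, indicial, hQ, neg_add_eq_sub]
  have h2 : (fuchsianOp (PowerSeries.C (-1)) Q φ).coeff 2 =
      Q.coeff 2 * φ.coeff 0 + Q.coeff 1 * φ.coeff 1 := by
    have hind : (2 : 𝕜) * (2 - 1) + -2 = 0 := by ring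
    simp [coeff_fuchsianOp, indicial, hQ, Finset.sum_range_succ, hind]
  constructor
  · intro h
    have hφ : φ.coeff 1 = Q.coeff 1 * φ.coeff 0 := (sub_eq_zero.mp (h1 ▸ h 1 one_le_two)).symm
    refine ⟨hφ, ?_⟩
    linear_combination h 2 le_rfl - h2 - Q.coeff 1 * hφ
  · rintro ⟨hφ, hres⟩ k hk
    interval_cases k
    · exact h0
    · rw [h1, hφ, sub_self]
    · rw [h2, hφ]
      linear_combination hres

/-- The coefficients which continue those of `φ` from order `N` on by the Frobenius recursion for
`fuchsianOp P Q`. -/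
noncomputable def frobeniusCoeff (P Q φ : 𝕜⟦X⟧) (N k : ℕ) : 𝕜 :=
  if k ≤ N then φ.coeff k
  else -(∑ j : Fin k, (j * P.coeff (k - j) + Q.coeff (k - j)) * frobeniusCoeff P Q φ N j) /
    indicial P Q k

lemma exists_fuchsianOp_eq_zero {P Q φ : 𝕜⟦X⟧} {N : ℕ}
    (hφ : ∀ k ≤ N, (fuchsianOp P Q φ).coeff k = 0) (hind : ∀ k > N, indicial P Q k ≠ 0) :
    ∃ ψ : 𝕜⟦X⟧, (∀ k ≤ N, ψ.coeff k = φ.coeff k) ∧ fuchsianOp P Q ψ = 0 := by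
  set ψ := PowerSeries.mk (frobeniusCoeff P Q φ N) with hψ
  have hψφ (k : ℕ) (hk : k ≤ N) : ψ.coeff k = φ.coeff k := by
    rw [hψ, PowerSeries.coeff_mk, frobeniusCoeff, if_pos hk]
  refine ⟨ψ, hψφ, PowerSeries.ext fun k => ?_⟩
  rw [map_zero]
  rcases le_or_gt k N with hk | hk
  · rw [← hφ k hk, coeff_fuchsianOp, coeff_fuchsianOp, hψφ k hk]
    congr 1
    refine Finset.sum_congr rfl fun j hj => ?_
    rw [hψφ j ((Finset.mem_range.mp hj).le.trans hk)]
  · have hrec : ψ.coeff k = -(∑ j ∈ range k, (j * P.coeff (k - j) + Q.coeff (k - j)) * ψ.coeff j) /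
        indicial P Q k := by
      simp only [hψ, PowerSeries.coeff_mk]
      rw [frobeniusCoeff, if_neg hk.not_ge, Finset.sum_range]
    rw [coeff_fuchsianOp, hrec, mul_div_cancel₀ _ (hind k hk), neg_add_cancel]

end Formal

lemma exists_le_mul_pow_of_le_mul_sum {b : ℕ → ℝ} {M : ℝ} (hb : ∀ k, 0 ≤ b k) (hM : 0 ≤ M)
    (h : ∀ᶠ k in atTop, b k ≤ M * ∑ j ∈ range k, b j) : ∃ C, ∀ k, b k ≤ C * (1 + M) ^ k := by
  obtain ⟨N, hN⟩ := eventually_atTop.mp h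
  have hmono : Monotone fun k => ∑ j ∈ range k, b j := monotone_nat_of_le_succ fun k => by
    simpa only [Finset.sum_range_succ, le_add_iff_nonneg_right] using hb k
  have hnonneg : 0 ≤ ∑ j ∈ range N, b j := Finset.sum_nonneg fun j _ => hb j
  have hsum (k : ℕ) : ∑ j ∈ range k, b j ≤ (∑ j ∈ range N, b j) * (1 + M) ^ k := by
    induction k with
    | zero => simpa using hnonneg
    | succ k ih =>
      rcases le_or_gt N k with hk | hk
      · calc ∑ j ∈ range (k + 1), b j ≤ (1 + M) * ∑ j ∈ range k, b j := by
              rw [Finset.sum_range_succ]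
              linarith [hN k hk]
          _ ≤ (1 + M) * ((∑ j ∈ range N, b j) * (1 + M) ^ k) := by gcongr
          _ = (∑ j ∈ range N, b j) * (1 + M) ^ (k + 1) := by ring
      · exact (hmono hk).trans (le_mul_of_one_le_right hnonneg (one_le_pow₀ (by linarith)))
  refine ⟨(∑ j ∈ range N, b j) * (1 + M), fun k => ?_⟩
  calc b k ≤ ∑ j ∈ range (k + 1), b j :=
        Finset.single_le_sum (fun j _ => hb j) (Finset.self_mem_range_succ k)
    _ ≤ (∑ j ∈ range N, b j) * (1 + M) ^ (k + 1) := hsum (k + 1)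
    _ = (∑ j ∈ range N, b j) * (1 + M) * (1 + M) ^ k := by ring

variable {𝕜 : Type*} [RCLike 𝕜]

lemma eventually_le_norm_indicial (P Q : 𝕜⟦X⟧) : ∀ᶠ k : ℕ in atTop, k ≤ ‖indicial P Q k‖ := by
  filter_upwards [tendsto_natCast_atTop_atTop.eventually_ge_atTop
    (2 + ‖P.coeff 0‖ + ‖Q.coeff 0‖)] with k hk
  have hQk : ‖Q.coeff 0‖ ≤ k * ‖Q.coeff 0‖ :=
    le_mul_of_one_le_left (norm_nonneg _)
      (by linarith [norm_nonneg (P.coeff 0), norm_nonneg (Q.coeff 0)])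
  have hdecomp : (k : 𝕜) * k = indicial P Q k + (k - P.coeff 0 * k - Q.coeff 0) := by
    rw [indicial]
    ring
  have hnorm : (k : ℝ) * k ≤ ‖indicial P Q k‖ + (k + ‖P.coeff 0‖ * k + ‖Q.coeff 0‖) := by
    calc (k : ℝ) * k = ‖(k : 𝕜) * k‖ := by simp
      _ ≤ ‖indicial P Q k‖ + ‖(k : 𝕜) - P.coeff 0 * k - Q.coeff 0‖ :=
        hdecomp ▸ norm_add_le _ _
      _ ≤ ‖indicial P Q k‖ + (‖(k : 𝕜)‖ + ‖P.coeff 0 * k‖ + ‖Q.coeff 0‖) := by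
        gcongr
        exact (norm_sub_le _ _).trans (by gcongr; exact norm_sub_le _ _)
      _ = ‖indicial P Q k‖ + (k + ‖P.coeff 0‖ * k + ‖Q.coeff 0‖) := by simp
  nlinarith [mul_le_mul_of_nonneg_left hk (Nat.cast_nonneg (α := ℝ) k)]

lemma norm_natCast_mul_coeff_add_coeff_mul_pow_le {P Q : 𝕜⟦X⟧} {r M : ℝ} (hr : 0 ≤ r)
    (hP : ∀ k, ‖P.coeff k‖ * r ^ k ≤ M) (hQ : ∀ k, ‖Q.coeff k‖ * r ^ k ≤ M) (j k : ℕ) :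
    ‖j * P.coeff k + Q.coeff k‖ * r ^ k ≤ (j + 1) * M := by
  calc ‖j * P.coeff k + Q.coeff k‖ * r ^ k
      ≤ (j * ‖P.coeff k‖ + ‖Q.coeff k‖) * r ^ k := by
        gcongr
        exact (norm_add_le _ _).trans_eq (by simp)
    _ = j * (‖P.coeff k‖ * r ^ k) + ‖Q.coeff k‖ * r ^ k := by ring
    _ ≤ j * M + M := by gcongr <;> apply_assumption
    _ = (j + 1) * M := by ring

lemma norm_coeff_mul_pow_le_of_fuchsianOp_eq_zero {P Q φ : 𝕜⟦X⟧} {r M : ℝ} (hr : 0 ≤ r)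
    (hP : ∀ k, ‖P.coeff k‖ * r ^ k ≤ M) (hQ : ∀ k, ‖Q.coeff k‖ * r ^ k ≤ M)
    (hφ : fuchsianOp P Q φ = 0) {k : ℕ} (hk : 0 < k) (hind : k ≤ ‖indicial P Q k‖) :
    ‖φ.coeff k‖ * r ^ k ≤ M * ∑ j ∈ range k, ‖φ.coeff j‖ * r ^ j := by
  have hM : 0 ≤ M := (by positivity : (0 : ℝ) ≤ ‖P.coeff 0‖ * r ^ 0).trans (hP 0)
  have hrec : indicial P Q k * φ.coeff k =
      -∑ j ∈ range k, (j * P.coeff (k - j) + Q.coeff (k - j)) * φ.coeff j := by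
    rw [eq_neg_iff_add_eq_zero, ← coeff_fuchsianOp, hφ, map_zero]
  have hterm (j : ℕ) (hj : j < k) :
      ‖(j * P.coeff (k - j) + Q.coeff (k - j)) * φ.coeff j‖ * r ^ k ≤
        k * (M * (‖φ.coeff j‖ * r ^ j)) := by
    have hjk : (j + 1 : ℝ) ≤ k := by exact_mod_cast hj
    calc ‖(j * P.coeff (k - j) + Q.coeff (k - j)) * φ.coeff j‖ * r ^ k
        = ‖j * P.coeff (k - j) + Q.coeff (k - j)‖ * r ^ (k - j) * (‖φ.coeff j‖ * r ^ j) := by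
          rw [norm_mul, ← pow_sub_mul_pow r hj.le]
          ring
      _ ≤ k * M * (‖φ.coeff j‖ * r ^ j) := by
          refine mul_le_mul_of_nonneg_right ?_ (by positivity)
          exact (norm_natCast_mul_coeff_add_coeff_mul_pow_le hr hP hQ j _).trans (by gcongr)
      _ = k * (M * (‖φ.coeff j‖ * r ^ j)) := mul_assoc _ _ _
  refine le_of_mul_le_mul_left ?_ (Nat.cast_pos.mpr hk : (0 : ℝ) < k)
  calc k * (‖φ.coeff k‖ * r ^ k) ≤ ‖indicial P Q k‖ * (‖φ.coeff k‖ * r ^ k) := by gcongr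
    _ = ‖∑ j ∈ range k, (j * P.coeff (k - j) + Q.coeff (k - j)) * φ.coeff j‖ * r ^ k := by
        rw [← mul_assoc, ← norm_mul, hrec, norm_neg]
    _ ≤ ∑ j ∈ range k, ‖(j * P.coeff (k - j) + Q.coeff (k - j)) * φ.coeff j‖ * r ^ k := by
        rw [← Finset.sum_mul]
        gcongr
        exact norm_sum_le _ _
    _ ≤ ∑ j ∈ range k, k * (M * (‖φ.coeff j‖ * r ^ j)) :=
        Finset.sum_le_sum fun j hj => hterm j (Finset.mem_range.mp hj)
    _ = k * (M * ∑ j ∈ range k, ‖φ.coeff j‖ * r ^ j) := by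
        rw [Finset.mul_sum, Finset.mul_sum]

variable {P Q h : 𝕜 → 𝕜} {p q φ : 𝕜⟦X⟧} {x : 𝕜}

lemma exists_hasPowerSeriesAt_of_fuchsianOp_eq_zero (hP : HasPowerSeriesAt P p x)
    (hQ : HasPowerSeriesAt Q q x) (hφ : fuchsianOp p q φ = 0) :
    ∃ h, HasPowerSeriesAt h φ x := by
  obtain ⟨r, ⟨M₁, hp⟩, ⟨M₂, hq⟩, hr : 0 < r⟩ := (hP.eventually_exists_norm_coeff_mul_pow_le.and
    (hQ.eventually_exists_norm_coeff_mul_pow_le.and self_mem_nhdsWithin)).exists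
  obtain ⟨M, hM₁, hM₂⟩ : ∃ M, M₁ ≤ M ∧ M₂ ≤ M := ⟨_, le_max_left _ _, le_max_right _ _⟩
  have hM : 0 ≤ M := (by positivity : (0 : ℝ) ≤ ‖p.coeff 0‖ * r ^ 0).trans ((hp 0).trans hM₁)
  obtain ⟨C, hC⟩ := exists_le_mul_pow_of_le_mul_sum (b := fun k => ‖φ.coeff k‖ * r ^ k)
    (fun k => by positivity) hM <| by
      filter_upwards [eventually_gt_atTop 0, eventually_le_norm_indicial p q] with k hk hind
      exact norm_coeff_mul_pow_le_of_fuchsianOp_eq_zero hr.le (fun k => (hp k).trans hM₁)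
        (fun k => (hq k).trans hM₂) hφ hk hind
  refine exists_hasPowerSeriesAt_of_norm_coeff_le (r := r / (1 + M)) (C := C) (by positivity)
    (fun k => ?_) x
  rw [div_pow, ← mul_div_assoc, div_le_iff₀ (by positivity)]
  exact hC k

lemma hasPowerSeriesAt_fuchsianOp (hP : HasPowerSeriesAt P p x) (hQ : HasPowerSeriesAt Q q x)
    (hh : HasPowerSeriesAt h φ x) :
    HasPowerSeriesAt (fun z => (z - x) ^ 2 * deriv (deriv h) z +
      P z * (z - x) * deriv h z + Q z * h z) (fuchsianOp p q φ) x := by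
  have hX := HasPowerSeriesAt.sub_const x
  simpa only [fuchsianOp, pow_two] using
    (((hX.mul hX).mul hh.deriv.deriv).add ((hP.mul hX).mul hh.deriv)).add (hQ.mul hh)

lemma exists_frobenius_solution (hP : HasPowerSeriesAt P p x) (hQ : HasPowerSeriesAt Q q x)
    {N : ℕ} (hφ : ∀ k ≤ N, (fuchsianOp p q φ).coeff k = 0)
    (hind : ∀ k > N, indicial p q (k : 𝕜) ≠ 0) :
    ∃ h, AnalyticAt 𝕜 h x ∧ h x = φ.coeff 0 ∧ ∀ᶠ z in 𝓝[≠] x,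
      (z - x) ^ 2 * deriv (deriv h) z + P z * (z - x) * deriv h z + Q z * h z = 0 := by
  obtain ⟨ψ, hψφ, hψ⟩ := exists_fuchsianOp_eq_zero hφ hind
  obtain ⟨h, hh⟩ := exists_hasPowerSeriesAt_of_fuchsianOp_eq_zero hP hQ hψ
  exact ⟨h, hh.analyticAt, by rw [← hh.coeff_zero, hψφ 0 N.zero_le],
    (hasPowerSeriesAt_fuchsianOp hP hQ hh).eventually_nhdsNE_eq_zero_iff.mpr hψ⟩

lemma exists_solution_ne_zero_iff_of_exponents_zero_two (hQ : HasPowerSeriesAt Q q x)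
    (hq : q.coeff 0 = 0) :
    (∃ h, AnalyticAt 𝕜 h x ∧ h x ≠ 0 ∧ ∀ᶠ z in 𝓝[≠] x,
      (z - x) ^ 2 * deriv (deriv h) z - (z - x) * deriv h z + Q z * h z = 0) ↔
      q.coeff 1 ^ 2 + q.coeff 2 = 0 := by
  have hP := HasPowerSeriesAt.const (-1) x
  have hode (h : 𝕜 → 𝕜) (z : 𝕜) :
      (z - x) ^ 2 * deriv (deriv h) z - (z - x) * deriv h z + Q z * h z =
        (z - x) ^ 2 * deriv (deriv h) z + -1 * (z - x) * deriv h z + Q z * h z := by ring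
  simp only [hode]
  constructor
  · rintro ⟨h, hh, hhx, hz⟩
    obtain ⟨φ, hφ⟩ := exists_hasPowerSeriesAt_of_analyticAt hh
    have hop := (hasPowerSeriesAt_fuchsianOp hP hQ hφ).eventually_nhdsNE_eq_zero_iff.mp hz
    have hres := ((forall_le_two_coeff_fuchsianOp_eq_zero_iff hq φ).mp fun k _ => by
      rw [hop, map_zero]).2
    exact (mul_eq_zero_iff_right (hφ.coeff_zero ▸ hhx)).mp hres
  · intro hres
    have hφ := (forall_le_two_coeff_fuchsianOp_eq_zero_iff hq
      (1 + PowerSeries.C (q.coeff 1) * PowerSeries.X)).mpr (by simp [hres, PowerSeries.coeff_one])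
    have hind (k : ℕ) (hk : k > 2) : indicial (PowerSeries.C (-1)) q (k : 𝕜) ≠ 0 := by
      have hfactor : indicial (PowerSeries.C (-1)) q (k : 𝕜) = k * (k - (2 : ℕ)) := by
        rw [indicial, hq, PowerSeries.coeff_zero_C]
        push_cast
        ring
      rw [hfactor]
      exact mul_ne_zero (Nat.cast_ne_zero.mpr (by lia))
        (sub_ne_zero.mpr (Nat.cast_injective.ne hk.ne'))
    obtain ⟨h, hh, hhx, hz⟩ := exists_frobenius_solution hP hQ hφ hind
    exact ⟨h, hh, by simp [hhx], hz⟩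

lemma exists_solution_ne_zero_of_forall_add_ne_zero (hQ : HasPowerSeriesAt Q q x)
    (hq : q.coeff 0 = 0) {c : 𝕜} (hc : ∀ k : ℕ, k + c ≠ 0) :
    ∃ h, AnalyticAt 𝕜 h x ∧ h x ≠ 0 ∧ ∀ᶠ z in 𝓝[≠] x,
      (z - x) ^ 2 * deriv (deriv h) z + c * (z - x) * deriv h z + Q z * h z = 0 := by
  have hind (k : ℕ) (hk : k > 0) : indicial (PowerSeries.C c) q (k : 𝕜) ≠ 0 := by
    obtain ⟨k, rfl⟩ := Nat.exists_eq_succ_of_ne_zero hk.ne'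
    have hfactor : indicial (PowerSeries.C c) q (k.succ : 𝕜) = k.succ * (k + c) := by
      rw [indicial, hq, PowerSeries.coeff_zero_C]
      push_cast
      ring
    rw [hfactor]
    exact mul_ne_zero (Nat.cast_ne_zero.mpr k.succ_ne_zero) (hc k)
  obtain ⟨h, hh, hhx, hode⟩ := exists_frobenius_solution (φ := 1) (HasPowerSeriesAt.const c x) hQ
    (fun k hk => by simp [Nat.le_zero.mp hk, coeff_fuchsianOp, indicial, hq]) hind
  exact ⟨h, hh, by simp [hhx], hode⟩

end Frobenius

section WeierstrassFunctions

variable {τ : ℂ} (hτ : 0 < τ.im)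

/-- The period pair `(1, τ)`, which gives access to the theory of `℘` for general lattices. -/
noncomputable def unitPeriodPair (τ : ℂ) (hτ : 0 < τ.im) : PeriodPair where
  ω₁ := 1
  ω₂ := τ
  indep := by
    refine LinearIndependent.pair_iff.mpr fun s t h => ?_
    have ht : t = 0 := by simpa [hτ.ne'] using congrArg Complex.im h
    exact ⟨by simpa [ht] using congrArg Complex.re h, ht⟩

lemma mem_unitPeriodPair_lattice {z : ℂ} : z ∈ (unitPeriodPair τ hτ).lattice ↔ InLattice τ z := by
  simp [PeriodPair.mem_lattice, InLattice, unitPeriodPair, eq_comm]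

include hτ

lemma wp_sub_inv_sq_eq_weierstrassPExcept (z : ℂ) :
    wp τ z - z⁻¹ ^ 2 = (unitPeriodPair τ hτ).weierstrassPExcept 0 z := by
  set L := unitPeriodPair τ hτ with hL
  have hcoe (w : ℤ × ℤ) : (L.latticeEquivProd.symm w : ℂ) = w.1 + w.2 * τ := by
    rw [L.latticeEquiv_symm_apply]
    simp [hL, unitPeriodPair]
  rw [wp, add_sub_cancel_left, PeriodPair.weierstrassPExcept,
    ← L.latticeEquivProd.symm.toEquiv.tsum_eq,
    ← tsum_subtype_eq_of_support_subset (s := {w : ℤ × ℤ | w ≠ 0})]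
  · refine tsum_congr fun w => ?_
    simp [← hcoe, show w.1 ≠ 0 from w.2]
  · intro w hw hw0
    simp [hw0] at hw

lemma wp_eq_weierstrassP (z : ℂ) : wp τ z = (unitPeriodPair τ hτ).weierstrassP z := by
  rw [← PeriodPair.weierstrassPExcept_add _ ⟨0, zero_mem _⟩,
    ← wp_sub_inv_sq_eq_weierstrassPExcept hτ]
  simp

lemma analyticAt_wp {z : ℂ} (hz : ¬ InLattice τ z) : AnalyticAt ℂ (wp τ) z := by
  rw [funext (wp_eq_weierstrassP hτ)]
  exact PeriodPair.analyticOnNhd_weierstrassP _ z (mt (mem_unitPeriodPair_lattice hτ).mp hz)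

lemma analyticAt_wp_sub_inv_sq : AnalyticAt ℂ (fun z => wp τ z - z⁻¹ ^ 2) 0 := by
  simp only [wp_sub_inv_sq_eq_weierstrassPExcept hτ]
  exact PeriodPair.analyticAt_weierstrassPExcept _ 0

lemma wp_zero : wp τ 0 = 0 := by
  rw [wp_eq_weierstrassP hτ, PeriodPair.weierstrassP_zero]

lemma halfp_mem_lattice (k : Fin 4) : halfp τ k ∈ (unitPeriodPair τ hτ).lattice := by
  have h1 := (unitPeriodPair τ hτ).ω₁_mem_lattice
  have hτ' := (unitPeriodPair τ hτ).ω₂_mem_lattice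
  fin_cases k
  exacts [zero_mem _, h1, hτ', add_mem h1 hτ']

lemma not_inLattice_add_halfp_div_two {z : ℂ} (hz : ¬ InLattice τ (2 * z)) (k : Fin 4) :
    ¬ InLattice τ (z + halfp τ k / 2) := by
  rw [← mem_unitPeriodPair_lattice hτ] at hz ⊢
  intro hk
  have h := sub_mem (add_mem hk hk) (halfp_mem_lattice hτ k)
  exact hz (by convert! h using 1; ring)

namespace IsWeierstrassZeta

variable {zeta : ℂ → ℂ → ℂ} (hzeta : IsWeierstrassZeta zeta)
include hzeta

lemma zero : zeta τ 0 = 0 := by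
  simpa [self_eq_neg] using (hzeta τ hτ).1 0

lemma analyticAt {z : ℂ} (hz : ¬ InLattice τ z) : AnalyticAt ℂ (zeta τ) z := by
  have hopen : IsOpen {w | ¬ InLattice τ w} := by
    simp only [← mem_unitPeriodPair_lattice hτ]
    exact (unitPeriodPair τ hτ).isClosed_lattice.isOpen_compl
  exact analyticAt_iff_eventually_differentiableAt.mpr <|
    (hopen.eventually_mem hz).mono fun w hw => ((hzeta τ hτ).2.1 w hw).differentiableAt

lemma analyticAt_sub_inv : AnalyticAt ℂ (fun z => zeta τ z - z⁻¹) 0 := by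
  have hderiv := (hzeta τ hτ).2.1
  have hlim := (hzeta τ hτ).2.2
  have hpunctured : ∀ᶠ z in 𝓝[≠] 0, ¬ InLattice τ z := by
    filter_upwards [nhdsWithin_le_nhds
      ((unitPeriodPair τ hτ).compl_lattice_sdiff_singleton_mem_nhds 0), self_mem_nhdsWithin]
      with z hz hz0 hzL
    exact hz ⟨(mem_unitPeriodPair_lattice hτ).mpr hzL, hz0⟩
  refine analyticAt_of_differentiable_on_punctured_nhds_of_continuousAt ?_ ?_
  · filter_upwards [hpunctured, self_mem_nhdsWithin] with z hz hz0
    exact (hderiv z hz).differentiableAt.sub (differentiableAt_inv hz0)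
  · simpa [continuousAt_iff_punctured_nhds, hzeta.zero hτ] using hlim

end IsWeierstrassZeta

end WeierstrassFunctions

section LamePotential

/-- The regular part `I + A / (z - p) - (3/4) / (z - p)²` of the generalized Lamé potential at `p`.
At `z = p` the conventions `0⁻¹ = 0`, `wp τ 0 = 0` and `zeta τ 0 = 0` make its value the limit of
the values nearby, so that it is analytic there. -/
noncomputable def lameRegularPart (n : Fin 4 → ℂ) (zeta : ℂ → ℂ → ℂ) (A B p τ z : ℂ) : ℂ :=
  Ipot n zeta A B p τ z + A * (z - p)⁻¹ - 3 / 4 * (z - p)⁻¹ ^ 2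

variable {τ : ℂ} (hτ : 0 < τ.im) (n : Fin 4 → ℂ) (A B : ℂ) {p : ℂ} {zeta : ℂ → ℂ → ℂ}
  (hzeta : IsWeierstrassZeta zeta)
include hτ hzeta

variable (p) in
lemma lameRegularPart_self : lameRegularPart n zeta A B p τ p =
    (∑ k : Fin 4, n k * (n k + 1) * wp τ (p + halfp τ k / 2)) + 3 / 4 * wp τ (2 * p) +
      zeta τ (2 * p) * A + B := by
  simp only [lameRegularPart, Ipot, sub_self, wp_zero hτ, hzeta.zero hτ, ← two_mul, inv_zero]
  ring

lemma analyticAt_lameRegularPart (hp : ¬ InLattice τ (2 * p)) :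
    AnalyticAt ℂ (lameRegularPart n zeta A B p τ) p := by
  have hsum : AnalyticAt ℂ
      (fun z => ∑ k : Fin 4, n k * (n k + 1) * wp τ (z + halfp τ k / 2)) p :=
    Finset.analyticAt_fun_sum _ fun k _ => analyticAt_const.fun_mul <|
      (analyticAt_wp hτ (not_inLattice_add_halfp_div_two hτ hp k)).fun_comp_of_eq (by fun_prop) rfl
  have hwp_add : AnalyticAt ℂ (fun z => wp τ (z + p)) p :=
    (analyticAt_wp hτ hp).fun_comp_of_eq (by fun_prop) (two_mul p).symm
  have hwp_sub : AnalyticAt ℂ (fun z => wp τ (z - p) - (z - p)⁻¹ ^ 2) p :=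
    (analyticAt_wp_sub_inv_sq hτ).fun_comp_of_eq (f := fun z => z - p) (by fun_prop) (sub_self p)
  have hzeta_add : AnalyticAt ℂ (fun z => zeta τ (z + p)) p :=
    (hzeta.analyticAt hτ hp).fun_comp_of_eq (by fun_prop) (two_mul p).symm
  have hzeta_sub : AnalyticAt ℂ (fun z => zeta τ (z - p) - (z - p)⁻¹) p :=
    (hzeta.analyticAt_sub_inv hτ).fun_comp_of_eq (f := fun z => z - p) (by fun_prop) (sub_self p)
  have hsplit : lameRegularPart n zeta A B p τ = fun z =>
      (∑ k : Fin 4, n k * (n k + 1) * wp τ (z + halfp τ k / 2)) +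
        3 / 4 * (wp τ (z + p) + (wp τ (z - p) - (z - p)⁻¹ ^ 2)) +
        A * (zeta τ (z + p) - (zeta τ (z - p) - (z - p)⁻¹)) + B := by
    ext z
    rw [lameRegularPart, Ipot]
    ring
  rw [hsplit]
  exact ((hsum.fun_add (analyticAt_const.fun_mul (hwp_add.fun_add hwp_sub))).fun_add
    (analyticAt_const.fun_mul (hzeta_add.fun_sub hzeta_sub))).fun_add analyticAt_const

lemma exists_hasPowerSeriesAt_lame (hp : ¬ InLattice τ (2 * p)) :
    ∃ Q q, HasPowerSeriesAt Q q p ∧ q.coeff 0 = 0 ∧ q.coeff 1 = A ∧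
      q.coeff 2 = -lameRegularPart n zeta A B p τ p ∧
      ∀ z ≠ p, 3 / 4 - (z - p) ^ 2 * Ipot n zeta A B p τ z = Q z := by
  obtain ⟨f, hf⟩ :=
    exists_hasPowerSeriesAt_of_analyticAt (analyticAt_lameRegularPart hτ n A B hzeta hp).fun_neg
  have hX := HasPowerSeriesAt.sub_const p
  refine ⟨_, _, hX.mul ((HasPowerSeriesAt.const A p).add (hX.mul hf)), ?_, ?_, ?_, fun z hz => ?_⟩
  · simp
  · simp [PowerSeries.coeff_succ_X_mul]
  · simp [PowerSeries.coeff_succ_X_mul, hf.coeff_zero]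
  · have hzp : z - p ≠ 0 := sub_ne_zero.mpr hz
    rw [lameRegularPart]
    field_simp
    ring

end LamePotential

/-- Lemma 2.1: `±p` are apparent singularities of the generalized Lamé
equation `y″ = I(z;τ)y`, i.e. near `p` there is a fundamental system
`y₁ = (z-p)^{-1/2}h₁, y₂ = (z-p)^{3/2}h₂` with `h₁, h₂` holomorphic and nonvanishing at `p`
(the condition on `h_i` below is the exact ODE obtained by substituting `y = (z-p)^σ h` with
`σ = -1/2` resp. `σ = 3/2` into `y″ = I y`), if and only if
`B = A² - ζ(2p)A - (3/4)℘(2p) - Σ n_k(n_k+1)℘(p + ω_k/2)`. -/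
theorem apparent_singularity_iff
    (τ : ℂ) (hτ : 0 < τ.im) (n : Fin 4 → ℂ) (A B p : ℂ)
    (zeta : ℂ → ℂ → ℂ) (hzeta : IsWeierstrassZeta zeta)
    (hp : ¬ InLattice τ (2 * p)) :
    (∃ r > (0 : ℝ), ∃ h₁ h₂ : ℂ → ℂ,
      AnalyticOnNhd ℂ h₁ (Metric.ball p r) ∧ AnalyticOnNhd ℂ h₂ (Metric.ball p r) ∧
      h₁ p ≠ 0 ∧ h₂ p ≠ 0 ∧
      (∀ z ∈ Metric.ball p r, z ≠ p →
        (z - p) ^ 2 * deriv (deriv h₁) z - (z - p) * deriv h₁ z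
          + (3 / 4 - (z - p) ^ 2 * Ipot n zeta A B p τ z) * h₁ z = 0 ∧
        (z - p) ^ 2 * deriv (deriv h₂) z + 3 * (z - p) * deriv h₂ z
          + (3 / 4 - (z - p) ^ 2 * Ipot n zeta A B p τ z) * h₂ z = 0))
    ↔ B = A ^ 2 - zeta τ (2 * p) * A - (3 / 4) * wp τ (2 * p)
        - ∑ k : Fin 4, n k * (n k + 1) * wp τ (p + halfp τ k / 2) := by
  obtain ⟨Q, q, hQ, hq0, hq1, hq2, hIQ⟩ := exists_hasPowerSeriesAt_lame hτ n A B hzeta hp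
  have hB : B = A ^ 2 - zeta τ (2 * p) * A - (3 / 4) * wp τ (2 * p)
      - ∑ k : Fin 4, n k * (n k + 1) * wp τ (p + halfp τ k / 2) ↔
        q.coeff 1 ^ 2 + q.coeff 2 = 0 := by
    rw [hq1, hq2, lameRegularPart_self hτ n A B p hzeta]
    constructor <;> intro h <;> linear_combination -h
  rw [hB, ← exists_solution_ne_zero_iff_of_exponents_zero_two hQ hq0]
  constructor
  · rintro ⟨r, hr, h₁, _, hh₁, -, hne₁, -, hode⟩
    refine ⟨h₁, hh₁ p (Metric.mem_ball_self hr), hne₁, ?_⟩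
    filter_upwards [nhdsWithin_le_nhds (Metric.ball_mem_nhds p hr), self_mem_nhdsWithin]
      with z hz hzp
    exact hIQ z hzp ▸ (hode z hz hzp).1
  · rintro ⟨h₁, hh₁, hne₁, hode₁⟩
    obtain ⟨h₂, hh₂, hne₂, hode₂⟩ := exists_solution_ne_zero_of_forall_add_ne_zero hQ hq0
      (c := 3) fun k => by exact_mod_cast (k + 2).succ_ne_zero
    obtain ⟨r, hr, hball⟩ := Metric.eventually_nhds_iff_ball.mp
      ((hh₁.eventually_analyticAt.and hh₂.eventually_analyticAt).and
        (eventually_nhdsWithin_iff.mp (hode₁.and hode₂)))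
    exact ⟨r, hr, h₁, h₂, fun z hz => (hball z hz).1.1, fun z hz => (hball z hz).1.2, hne₁, hne₂,
      fun z hz hzp => (hIQ z hzp).symm ▸ (hball z hz).2 hzp⟩
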